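/- (Horiguchi error evaluation formula for Reed–Solomon codes.) For every m ≥ 2t and every j with e_j ≠ 0, the error value satisfies e_j = ((f^e)'(α_j) · g^(m)(α_j))^{−1}, where g^(m) is the auxiliary polynomial of the Berlekamp–Massey algorithm and (f^e)' is the formal derivative of the error locator. -/

import Mathlib

open Polynomial
open scoped Classical

noncomputable section

variable {F : Type*} [Field F]

/-- The coefficient of `x^a` in the Laurent expansion of the rational function `h`
in `1/x` (i.e. the expansion at infinity): substituting `x = 1/t`, the rational
function `h(1/t)` equals `t^(deg denom - deg num) * reverse(num)(t)/reverse(denom)(t)`,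
and we take the coefficient of `t^(-a)` in its Laurent expansion at `t = 0`. -/
def coeffAtInf (h : RatFunc F) (a : ℤ) : F :=
  let v : RatFunc F :=
    (RatFunc.X : RatFunc F) ^ ((h.denom.natDegree : ℤ) - (h.num.natDegree : ℤ)) *
      (algebraMap (Polynomial F) (RatFunc F) h.num.reverse /
        algebraMap (Polynomial F) (RatFunc F) h.denom.reverse)
  ((v : LaurentSeries F)).coeff (-a)

variable (F) in
/-- The error locator polynomial `f^e`. -/
def errLoc {n : ℕ} (α : Fin n → F) (e : Fin n → F) : Polynomial F :=
  ∏ j ∈ Finset.univ.filter (fun j => e j ≠ 0), (X - C (α j))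

variable (F) in
/-- The error evaluator polynomial `φ^e`. -/
def errEval {n : ℕ} (α : Fin n → F) (e : Fin n → F) : Polynomial F :=
  ∑ j ∈ Finset.univ.filter (fun j => e j ≠ 0),
    C (e j) * ∏ k ∈ (Finset.univ.filter (fun k => e k ≠ 0)).erase j, (X - C (α k))

variable (F) in
/-- The syndrome `S = φ^e/f^e = ∑_j e_j/(x - α_j)` as a rational function. -/
def synd {n : ℕ} (α : Fin n → F) (e : Fin n → F) : RatFunc F :=
  algebraMap (Polynomial F) (RatFunc F) (errEval F α e) /
    algebraMap (Polynomial F) (RatFunc F) (errLoc F α e)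

variable (F) in
/-- One step of the Berlekamp--Massey algorithm: the state is the quadruple
`(f^(m), φ^(m), g^(m), ψ^(m))`. -/
def BMstep (S : RatFunc F) (m : ℕ)
    (st : Polynomial F × Polynomial F × Polynomial F × Polynomial F) :
    Polynomial F × Polynomial F × Polynomial F × Polynomial F :=
  let f := st.1
  let φ := st.2.1
  let g := st.2.2.1
  let ψ := st.2.2.2
  let d : ℕ := f.natDegree
  -- μ is the coefficient of x^(d-m-1) in the Laurent expansion of f^(m)·S in 1/x
  let μ : F := coeffAtInf (algebraMap (Polynomial F) (RatFunc F) f * S) ((d : ℤ) - m - 1)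
  let p : ℤ := 2 * d - m - 1
  if μ = 0 ∨ 0 ≤ p then
    (f - C μ * X ^ p.toNat * g, φ - C μ * X ^ p.toNat * ψ, g, ψ)
  else
    (X ^ (-p).toNat * f - C μ * g, X ^ (-p).toNat * φ - C μ * ψ, C μ⁻¹ * f, C μ⁻¹ * φ)

variable (F) in
/-- The Berlekamp--Massey data `(f^(m), φ^(m), g^(m), ψ^(m))`, initialized at
`(1, 0, 0, -1)`. -/
def BM (S : RatFunc F) : ℕ → Polynomial F × Polynomial F × Polynomial F × Polynomial F
  | 0 => (1, 0, 0, -1)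
  | m + 1 => BMstep F S m (BM S m)

end

/-!
Put `S = P / Q` with `P = φ^e` and `Q = f^e`. Besides the determinant `f ψ - φ g = -1`, the
Berlekamp--Massey recursion controls the residuals `f P - φ Q` and `g P - ψ Q`: the degree of the
first drops below `deg Q + deg f - m`, while the second stays monic of degree `deg Q - deg f`. Once
`m + 1 ≥ 2 deg Q`, either `deg f = deg Q`, or the first residual vanishes and then the determinant
makes the second one a common divisor of `P` and `Q`. As these are coprime, in both cases
`g P - ψ Q = 1`. At `α_j` the polynomial `Q` vanishes and `P` takes the value `e_j Q'(α_j)`, so this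
Bezout identity becomes `g(α_j) e_j Q'(α_j) = 1`.

The coefficients of `f S` at infinity are read off after substituting `x = 1/t`, which embeds the
rational functions into the Laurent series in `t`.
-/

section ExpansionAtInfinity

open HahnSeries (single)

variable {R : Type*} [CommSemiring R]

theorem eval₂_C_single_one (P : R[X]) :
    eval₂ HahnSeries.C (single (1 : ℤ) (1 : R)) P = ((P : PowerSeries R) : LaurentSeries R) := by
  induction P using Polynomial.induction_on' with
  | add P Q hP hQ => simp [hP, hQ]
  | monomial k c =>
    rw [← C_mul_X_pow_eq_monomial]
    simp

theorem eval₂_C_single_neg_one {P : R[X]} {N : ℕ} (hN : P.natDegree ≤ N) :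
    eval₂ HahnSeries.C (single (-1 : ℤ) (1 : R)) P =
      single (-N : ℤ) (1 : R) * ((P.reflect N : PowerSeries R) : LaurentSeries R) := by
  let _ : Invertible (single (-1 : ℤ) (1 : R) : LaurentSeries R) := ⟨single 1 1, by simp, by simp⟩
  have hinv : ⅟(single (-1 : ℤ) (1 : R) : LaurentSeries R) = single 1 1 := rfl
  rw [← eval₂_reflect_mul_pow (HahnSeries.C : R →+* LaurentSeries R) _ N P hN, mul_comm,
    hinv, HahnSeries.single_pow, eval₂_C_single_one]
  simp

theorem eval₂_C_single_neg_one_injective (R : Type*) [CommRing R] [IsDomain R] :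
    Function.Injective (eval₂RingHom HahnSeries.C (single (-1 : ℤ) (1 : R))) := by
  refine (injective_iff_map_eq_zero _).2 fun P hP => ?_
  rw [coe_eval₂RingHom, eval₂_C_single_neg_one le_rfl] at hP
  simpa [map_eq_zero_iff _ HahnSeries.ofPowerSeries_injective] using hP

variable {F : Type*} [Field F]

/-- The embedding of rational functions into Laurent series that sends `x` to `t⁻¹`, i.e. the
expansion at infinity written in the uniformizer `t = 1/x`. -/
noncomputable def expansionAtInf : RatFunc F →+* LaurentSeries F :=
  RatFunc.liftRingHom (eval₂RingHom HahnSeries.C (single (-1 : ℤ) (1 : F)))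
    (nonZeroDivisors_le_comap_nonZeroDivisors_of_injective _ (eval₂_C_single_neg_one_injective F))

theorem expansionAtInf_algebraMap {P : F[X]} {N : ℕ} (hN : P.natDegree ≤ N) :
    expansionAtInf (algebraMap F[X] (RatFunc F) P) =
      single (-N : ℤ) 1 * ((P.reflect N : PowerSeries F) : LaurentSeries F) := by
  rw [expansionAtInf, RatFunc.liftRingHom_algebraMap, coe_eval₂RingHom, eval₂_C_single_neg_one hN]

theorem expansionAtInf_div {P Q : F[X]} {M N : ℕ} (hM : P.natDegree ≤ M) (hN : Q.natDegree ≤ N) :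
    expansionAtInf (algebraMap F[X] (RatFunc F) P / algebraMap F[X] (RatFunc F) Q) =
      single (N - M : ℤ) 1 * (((P.reflect M : PowerSeries F) : LaurentSeries F) /
        ((Q.reflect N : PowerSeries F) : LaurentSeries F)) := by
  rw [map_div₀, expansionAtInf_algebraMap hM, expansionAtInf_algebraMap hN, mul_div_mul_comm,
    div_eq_mul_inv (single _ _), HahnSeries.inv_single, HahnSeries.single_mul_single, neg_neg,
    inv_one, mul_one, neg_add_eq_sub]

theorem coeffAtInf_eq_coeff_expansionAtInf (h : RatFunc F) (a : ℤ) :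
    coeffAtInf h a = (expansionAtInf h).coeff (-a) := by
  conv_rhs => rw [← RatFunc.num_div_denom h, expansionAtInf_div le_rfl le_rfl]
  simp only [coeffAtInf, map_mul, map_zpow₀, map_div₀, RatFunc.coe_X, ← RatFunc.single_zpow,
    RatFunc.coe_coe]
  rfl

theorem coeffAtInf_add (h k : RatFunc F) (a : ℤ) :
    coeffAtInf (h + k) a = coeffAtInf h a + coeffAtInf k a := by
  simp [coeffAtInf_eq_coeff_expansionAtInf]

theorem coeffAtInf_algebraMap_of_neg (P : F[X]) {a : ℤ} (ha : a < 0) :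
    coeffAtInf (algebraMap F[X] (RatFunc F) P) a = 0 := by
  rw [coeffAtInf_eq_coeff_expansionAtInf, expansionAtInf_algebraMap le_rfl,
    HahnSeries.coeff_single_mul, PowerSeries.coeff_coe, if_neg (by omega), Polynomial.coeff_coe,
    coeff_reflect, revAt_eq_self_of_lt (by omega), coeff_eq_zero_of_natDegree_lt (by omega),
    mul_zero]

theorem coe_div_coe_of_constantCoeff_ne_zero (f : PowerSeries F) {g : PowerSeries F}
    (hg : PowerSeries.constantCoeff g ≠ 0) :
    (f : LaurentSeries F) / (g : LaurentSeries F) =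
      ((f * g⁻¹ : PowerSeries F) : LaurentSeries F) := by
  have hg' : (g : LaurentSeries F) ≠ 0 :=
    (map_ne_zero_iff _ HahnSeries.ofPowerSeries_injective).2 fun h => hg (by simp [h])
  rw [div_eq_iff hg', ← PowerSeries.coe_mul, mul_assoc, PowerSeries.inv_mul_cancel g hg, mul_one]

theorem coeffAtInf_div {P Q : F[X]} (hQ : Q ≠ 0) {i : ℕ} (hP : P.natDegree ≤ i) :
    coeffAtInf (algebraMap F[X] (RatFunc F) P / algebraMap F[X] (RatFunc F) Q)
      (i - Q.natDegree) = P.coeff i / Q.leadingCoeff := by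
  rw [coeffAtInf_eq_coeff_expansionAtInf, expansionAtInf_div hP le_rfl, ← reverse,
    coe_div_coe_of_constantCoeff_ne_zero _ (by simpa using hQ), HahnSeries.coeff_single_mul,
    PowerSeries.coeff_coe]
  simp [coeff_reflect, div_eq_mul_inv]

theorem coeffAtInf_mul_div_of_neg (f φ P : F[X]) {Q : F[X]} (hQ : Q ≠ 0) {a : ℤ} (ha : a < 0) :
    coeffAtInf (algebraMap F[X] (RatFunc F) f *
        (algebraMap F[X] (RatFunc F) P / algebraMap F[X] (RatFunc F) Q)) a =
      coeffAtInf (algebraMap F[X] (RatFunc F) (f * P - φ * Q) / algebraMap F[X] (RatFunc F) Q)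
        a := by
  have hQ' : algebraMap F[X] (RatFunc F) Q ≠ 0 := RatFunc.algebraMap_ne_zero hQ
  have hsplit : algebraMap F[X] (RatFunc F) f *
      (algebraMap F[X] (RatFunc F) P / algebraMap F[X] (RatFunc F) Q) =
        algebraMap F[X] (RatFunc F) φ +
          algebraMap F[X] (RatFunc F) (f * P - φ * Q) / algebraMap F[X] (RatFunc F) Q := by
    simp only [map_sub, map_mul]
    field_simp
    ring
  rw [hsplit, coeffAtInf_add, coeffAtInf_algebraMap_of_neg _ ha, zero_add]

end ExpansionAtInfinity

section BerlekampMassey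

variable {F : Type*} [Field F]

theorem coeff_sub_C_coeff_mul_eq_zero {R : Type*} [Ring R] {u v : R[X]} {n j : ℕ}
    (hv : IsMonicOfDegree v n) (hu : u.natDegree ≤ n) (hj : n ≤ j) :
    (u - C (u.coeff n) * v).coeff j = 0 := by
  rw [coeff_sub, coeff_C_mul]
  obtain rfl | hlt := hj.eq_or_lt
  · rw [← hv.natDegree_eq, hv.monic.coeff_natDegree, mul_one, sub_self]
  · rw [coeff_eq_zero_of_natDegree_lt (hu.trans_lt hlt),
      coeff_eq_zero_of_natDegree_lt (hv.natDegree_eq.trans_lt hlt), mul_zero, sub_self]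

/-- The loop invariant of the Berlekamp--Massey algorithm run on `S = P / Q` with `Q` monic. The
residual `f * P - φ * Q` is `Q * (f * S - φ)`, so `coeff_residual` says that `f * S - φ` has degree
less than `deg f - m`; the auxiliary residual `g * P - ψ * Q` has degree exactly
`deg Q - deg f`. -/
structure BMInvariant (P Q : F[X]) (m : ℕ) (f φ g ψ : F[X]) : Prop where
  monic : f.Monic
  det_eq : f * ψ - φ * g = -1
  natDegree_add_le : g.natDegree + f.natDegree ≤ m
  coeff_residual : ∀ i, Q.natDegree + f.natDegree ≤ i + m → (f * P - φ * Q).coeff i = 0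
  aux_monic : (g * P - ψ * Q).Monic
  natDegree_aux_add : (g * P - ψ * Q).natDegree + f.natDegree = Q.natDegree

namespace BMInvariant

variable {P Q f φ g ψ : F[X]} {m : ℕ}

theorem initial (hQ : Q.Monic) (hPQ : P.degree < Q.degree) : BMInvariant P Q 0 1 0 0 (-1) where
  monic := monic_one
  det_eq := by simp
  natDegree_add_le := by simp
  coeff_residual i hi := by
    rw [degree_eq_natDegree hQ.ne_zero, degree_lt_iff_coeff_zero] at hPQ
    simpa using hPQ i (by simpa using hi)
  aux_monic := by simpa using hQ
  natDegree_aux_add := by simp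

theorem natDegree_residual_le (h : BMInvariant P Q m f φ g ψ) {i : ℕ}
    (hi : Q.natDegree + f.natDegree ≤ i + m + 1) : (f * P - φ * Q).natDegree ≤ i :=
  natDegree_le_iff_coeff_eq_zero.2 fun j hj => h.coeff_residual j (by omega)

theorem residual_eq_zero (h : BMInvariant P Q m f φ g ψ) (hm : Q.natDegree + f.natDegree ≤ m) :
    f * P - φ * Q = 0 := by
  ext i
  exact h.coeff_residual i (by omega)

theorem coeffAtInf_eq (h : BMInvariant P Q m f φ g ψ) (hQ : Q ≠ 0) :
    coeffAtInf (algebraMap F[X] (RatFunc F) f *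
        (algebraMap F[X] (RatFunc F) P / algebraMap F[X] (RatFunc F) Q)) (f.natDegree - m - 1) =
      coeffAtInf (algebraMap F[X] (RatFunc F) (f * P - φ * Q) / algebraMap F[X] (RatFunc F) Q)
        (f.natDegree - m - 1) := by
  have hg := h.natDegree_add_le
  exact coeffAtInf_mul_div_of_neg f φ P hQ (by omega)

theorem coeffAtInf_eq_coeff (h : BMInvariant P Q m f φ g ψ) (hQ : Q.Monic) {i : ℕ}
    (hi : i + m + 1 = Q.natDegree + f.natDegree) :
    coeffAtInf (algebraMap F[X] (RatFunc F) f *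
        (algebraMap F[X] (RatFunc F) P / algebraMap F[X] (RatFunc F) Q)) (f.natDegree - m - 1) =
      (f * P - φ * Q).coeff i := by
  rw [h.coeffAtInf_eq hQ.ne_zero, show (f.natDegree - m - 1 : ℤ) = i - Q.natDegree by omega,
    coeffAtInf_div hQ.ne_zero (h.natDegree_residual_le hi.ge), hQ.leadingCoeff, div_one]

theorem coeffAtInf_eq_zero (h : BMInvariant P Q m f φ g ψ) (hQ : Q ≠ 0)
    (hm : Q.natDegree + f.natDegree ≤ m) :
    coeffAtInf (algebraMap F[X] (RatFunc F) f *
        (algebraMap F[X] (RatFunc F) P / algebraMap F[X] (RatFunc F) Q)) (f.natDegree - m - 1) =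
      0 := by
  rw [h.coeffAtInf_eq hQ, h.residual_eq_zero hm, map_zero, zero_div]
  simp [coeffAtInf_eq_coeff_expansionAtInf]

theorem step_keep (h : BMInvariant P Q m f φ g ψ)
    (hμ : ∀ i, i + m + 1 = Q.natDegree + f.natDegree → (f * P - φ * Q).coeff i = 0) :
    BMInvariant P Q (m + 1) f φ g ψ where
  __ := h
  natDegree_add_le := h.natDegree_add_le.trans m.le_succ
  coeff_residual i hi := by
    rcases Nat.lt_or_ge (i + m) (Q.natDegree + f.natDegree) with hlt | hle
    · exact hμ i (by omega)
    · exact h.coeff_residual i hle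

theorem step_same_degree (h : BMInvariant P Q m f φ g ψ) {i k : ℕ}
    (hi : i + m + 1 = Q.natDegree + f.natDegree) (hk : 2 * f.natDegree = k + m + 1) :
    BMInvariant P Q (m + 1) (f - C ((f * P - φ * Q).coeff i) * X ^ k * g)
      (φ - C ((f * P - φ * Q).coeff i) * X ^ k * ψ) g ψ := by
  have hg := h.natDegree_add_le
  have haux := h.natDegree_aux_add
  set μ := (f * P - φ * Q).coeff i with hμ
  have hlt : (C μ * X ^ k * g).natDegree < f.natDegree :=
    (natDegree_mul_le_of_le (natDegree_C_mul_X_pow_le μ k) le_rfl).trans_lt (by omega)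
  have hf : IsMonicOfDegree (f - C μ * X ^ k * g) f.natDegree :=
    IsMonicOfDegree.sub ⟨rfl, h.monic⟩ hlt
  have hfdeg := hf.natDegree_eq
  have hv : IsMonicOfDegree (X ^ k * (g * P - ψ * Q)) i := by
    rw [show i = k + (g * P - ψ * Q).natDegree by omega]
    exact (isMonicOfDegree_X_pow F k).mul ⟨rfl, h.aux_monic⟩
  have hres : (f - C μ * X ^ k * g) * P - (φ - C μ * X ^ k * ψ) * Q =
      f * P - φ * Q - C μ * (X ^ k * (g * P - ψ * Q)) := by ring
  refine ⟨hf.monic, by linear_combination h.det_eq, by omega, fun j hj => ?_, h.aux_monic,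
    by omega⟩
  rw [hres, hμ]
  exact coeff_sub_C_coeff_mul_eq_zero hv (h.natDegree_residual_le hi.ge) (by omega)

theorem step_change_degree (h : BMInvariant P Q m f φ g ψ) {i k : ℕ}
    (hi : i + m + 1 = Q.natDegree + f.natDegree) (hk : 2 * f.natDegree + k = m + 1)
    (hμ : (f * P - φ * Q).coeff i ≠ 0) :
    BMInvariant P Q (m + 1) (X ^ k * f - C ((f * P - φ * Q).coeff i) * g)
      (X ^ k * φ - C ((f * P - φ * Q).coeff i) * ψ)
      (C ((f * P - φ * Q).coeff i)⁻¹ * f) (C ((f * P - φ * Q).coeff i)⁻¹ * φ) := by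
  set μ := (f * P - φ * Q).coeff i with hμ_def
  have hg := h.natDegree_add_le
  have haux := h.natDegree_aux_add
  have hlt : (C μ * g).natDegree < k + f.natDegree :=
    (natDegree_C_mul_le μ g).trans_lt (by omega)
  have hf : IsMonicOfDegree (X ^ k * f - C μ * g) (k + f.natDegree) :=
    ((isMonicOfDegree_X_pow F k).mul ⟨rfl, h.monic⟩).sub hlt
  have hfdeg := hf.natDegree_eq
  have hgdeg : (C μ⁻¹ * f).natDegree = f.natDegree := natDegree_C_mul (inv_ne_zero hμ)
  have hrle : (f * P - φ * Q).natDegree ≤ i := h.natDegree_residual_le hi.ge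
  have hrdeg : (f * P - φ * Q).natDegree = i := natDegree_eq_of_le_of_coeff_ne_zero hrle hμ
  have hC : C μ * C μ⁻¹ = 1 := by rw [← C_mul, mul_inv_cancel₀ hμ, C_1]
  have hres : (X ^ k * f - C μ * g) * P - (X ^ k * φ - C μ * ψ) * Q =
      X ^ k * (f * P - φ * Q) - C μ * (g * P - ψ * Q) := by ring
  have haux' : C μ⁻¹ * f * P - C μ⁻¹ * φ * Q = C μ⁻¹ * (f * P - φ * Q) := by ring
  refine ⟨hf.monic, ?_, by omega, fun j hj => ?_, ?_, ?_⟩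
  · linear_combination (f * ψ - φ * g) * hC + h.det_eq
  · rw [hres, hμ_def, ← coeff_X_pow_mul _ k i]
    exact coeff_sub_C_coeff_mul_eq_zero ⟨by omega, h.aux_monic⟩
      (natDegree_mul_le_of_le (natDegree_X_pow_le k) hrle |>.trans (by omega)) (by omega)
  · rw [haux', Monic, leadingCoeff_mul, leadingCoeff_C, leadingCoeff, hrdeg, inv_mul_cancel₀ hμ]
  · rw [haux', natDegree_C_mul (inv_ne_zero hμ), hrdeg, hfdeg]
    omega

protected theorem step (h : BMInvariant P Q m f φ g ψ) (hQ : Q.Monic) :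
    let st := BMstep F (algebraMap F[X] (RatFunc F) P / algebraMap F[X] (RatFunc F) Q) m
      (f, φ, g, ψ)
    BMInvariant P Q (m + 1) st.1 st.2.1 st.2.2.1 st.2.2.2 := by
  simp only [BMstep]
  rcases Nat.lt_or_ge m (Q.natDegree + f.natDegree) with hlt | hle
  · obtain ⟨i, hi⟩ : ∃ i, i + m + 1 = Q.natDegree + f.natDegree :=
      ⟨Q.natDegree + f.natDegree - (m + 1), by omega⟩
    rw [h.coeffAtInf_eq_coeff hQ hi]
    split_ifs with hstay
    · by_cases hμ : (f * P - φ * Q).coeff i = 0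
      · simpa [hμ] using h.step_keep fun k hk => (show k = i by omega) ▸ hμ
      · have hp := hstay.resolve_left hμ
        exact h.step_same_degree hi (by omega)
    · rw [not_or, not_le] at hstay
      exact h.step_change_degree hi (by omega) hstay.1
  · simpa [h.coeffAtInf_eq_zero hQ.ne_zero hle] using h.step_keep fun i hi => by omega

theorem aux_eq_one_of_isCoprime (h : BMInvariant P Q m f φ g ψ) (hPQ : IsCoprime P Q)
    (hm : 2 * Q.natDegree ≤ m + 1) : g * P - ψ * Q = 1 := by
  have haux := h.natDegree_aux_add
  obtain hdeg | hdeg : f.natDegree = Q.natDegree ∨ f.natDegree < Q.natDegree := by omega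
  · exact h.aux_monic.natDegree_eq_zero.1 (by omega)
  · have hres := h.residual_eq_zero (by omega)
    have hQ : f * (g * P - ψ * Q) = Q := by linear_combination g * hres - Q * h.det_eq
    have hP : φ * (g * P - ψ * Q) = P := by linear_combination ψ * hres - P * h.det_eq
    exact h.aux_monic.isUnit_iff.1
      (hPQ.isUnit_of_dvd' (Dvd.intro_left _ hP) (Dvd.intro_left _ hQ))

end BMInvariant

theorem bmInvariant_BM {P Q : F[X]} (hQ : Q.Monic) (hPQ : P.degree < Q.degree) (m : ℕ) :
    let st := BM F (algebraMap F[X] (RatFunc F) P / algebraMap F[X] (RatFunc F) Q) m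
    BMInvariant P Q m st.1 st.2.1 st.2.2.1 st.2.2.2 := by
  induction m with
  | zero => exact BMInvariant.initial hQ hPQ
  | succ m ih => exact ih.step hQ

theorem BM_mul_sub_mul_eq_one {P Q : F[X]} (hQ : Q.Monic) (hdeg : P.degree < Q.degree)
    (hPQ : IsCoprime P Q) {m : ℕ} (hm : 2 * Q.natDegree ≤ m + 1) :
    let st := BM F (algebraMap F[X] (RatFunc F) P / algebraMap F[X] (RatFunc F) Q) m
    st.2.2.1 * P - st.2.2.2 * Q = 1 :=
  (bmInvariant_BM hQ hdeg m).aux_eq_one_of_isCoprime hPQ hm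

end BerlekampMassey

section ErrorPolynomials

variable {F : Type*} [Field F] {n : ℕ}

open Lagrange

theorem errLoc_eq_nodal (α e : Fin n → F) : errLoc F α e = nodal {j | e j ≠ 0} α := rfl

theorem errEval_eq_sum_nodal (α e : Fin n → F) :
    errEval F α e = ∑ j with e j ≠ 0, C (e j) * nodal (({k | e k ≠ 0} : Finset _).erase j) α := rfl

theorem degree_errEval_lt (α e : Fin n → F) : (errEval F α e).degree < (errLoc F α e).degree := by
  rw [errEval_eq_sum_nodal, errLoc_eq_nodal, degree_nodal]
  refine (degree_sum_le _ _).trans_lt ((Finset.sup_lt_iff (WithBot.bot_lt_coe _)).2 fun j hj => ?_)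
  rw [degree_C_mul (Finset.mem_filter.1 hj).2, degree_nodal]
  exact_mod_cast Finset.card_erase_lt_of_mem hj

theorem eval_errEval (α : Fin n → F) {e : Fin n → F} {j : Fin n} (hj : e j ≠ 0) :
    (errEval F α e).eval (α j) = e j * (derivative (errLoc F α e)).eval (α j) := by
  have hmem : j ∈ ({k | e k ≠ 0} : Finset (Fin n)) := by simpa using hj
  rw [errEval_eq_sum_nodal, errLoc_eq_nodal, eval_nodal_derivative_eval_node_eq hmem,
    eval_finsetSum, Finset.sum_eq_single_of_mem j hmem, eval_mul, eval_C]
  intro i _ hij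
  rw [eval_mul, eval_nodal_at_node (Finset.mem_erase.2 ⟨hij.symm, hmem⟩), mul_zero]

theorem isCoprime_errEval_errLoc {α e : Fin n → F} (hα : Set.InjOn α (Function.support e)) :
    IsCoprime (errEval F α e) (errLoc F α e) := by
  refine IsCoprime.prod_right fun j hj => IsCoprime.symm ?_
  refine (irreducible_X_sub_C (α j)).coprime_iff_not_dvd.2 fun hdvd => ?_
  have hj' : e j ≠ 0 := by simpa using hj
  rw [dvd_iff_isRoot, IsRoot.def, eval_errEval α hj', errLoc_eq_nodal,
    eval_nodal_derivative_eval_node_eq hj] at hdvd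
  refine mul_ne_zero hj' (eval_nodal_not_at_node fun k hk => ?_) hdvd
  rw [Finset.mem_erase, Finset.mem_filter] at hk
  exact hα.ne hj' hk.2.2 hk.1.symm

end ErrorPolynomials

theorem horiguchi_formula_RS_general {F : Type*} [Field F] {n : ℕ} (α e : Fin n → F)
    (hα : Set.InjOn α (Function.support e))
    (t : ℕ) (ht : t = (Finset.univ.filter (fun j => e j ≠ 0)).card)
    (S : RatFunc F) (hS : S = synd F α e) (m : ℕ) (hm : 2 * t ≤ m + 1)
    (j : Fin n) (hj : e j ≠ 0) :
    e j = ((derivative (errLoc F α e)).eval (α j) * (BM F S m).2.2.1.eval (α j))⁻¹ := by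
  have hbezout : (BM F S m).2.2.1 * errEval F α e - (BM F S m).2.2.2 * errLoc F α e = 1 := by
    rw [hS, synd]
    refine BM_mul_sub_mul_eq_one Lagrange.nodal_monic (degree_errEval_lt α e)
      (isCoprime_errEval_errLoc hα) ?_
    rwa [Lagrange.natDegree_nodal, ← ht]
  have hroot : (errLoc F α e).eval (α j) = 0 :=
    Lagrange.eval_nodal_at_node (by simpa using hj)
  have heval := congrArg (eval (α j)) hbezout
  rw [eval_sub, eval_mul, eval_mul, hroot, eval_errEval α hj, eval_one] at heval
  exact eq_inv_of_mul_eq_one_left (by linear_combination heval)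

open scoped Classical in
/-- **Horiguchi error-evaluation formula for Reed--Solomon codes.**  For `m ≥ 2t`
and `e_j ≠ 0`, the error value is `e_j = ((f^e)'(α_j)·g^(m)(α_j))⁻¹`. -/
theorem horiguchi_formula_RS {F : Type*} [Field F] [Fintype F] {n : ℕ}
    (α : Fin n → F) (hα : Function.Injective α) (e : Fin n → F)
    (t : ℕ) (ht : t = (Finset.univ.filter (fun j => e j ≠ 0)).card)
    (S : RatFunc F) (hS : S = synd F α e) (m : ℕ) (hm : 2 * t ≤ m)
    (j : Fin n) (hj : e j ≠ 0) :
    e j = ((Polynomial.derivative (errLoc F α e)).eval (α j) *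
        (BM F S m).2.2.1.eval (α j))⁻¹ :=
  horiguchi_formula_RS_general α e hα.injOn t ht S hS m (by omega) j hj
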